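/- Let G = ⟨S⟩ be generated by a finite symmetric set S, with relations R, and suppose G has Kazhdan's property (T); let r > 0 be as in the coboundary theorem for property-(T) groups (any α ∈ Z^1(T,μ,K) with ‖α‖_{μ,S} ≤ r over an ergodic system is a coboundary). Then for every r' > 0 there exist ε > 0 and a finite subset F ⊆ R such that the following holds: for every ergodic measure-preserving G-action T on a standard probability space (X, μ), every closed subgroup K ≤ 𝕋, and every K-valued (F, ε)-near-cocycle α ∈ Z^1_{F,ε}(T, μ, K) with ‖α‖_{μ,S} ≤ r, there is β ∈ U(μ, K) with ‖α − dβ‖_{μ,S} < r'. -/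

import Mathlib

/-!
The idea is compactness. The cochains over all `G`-systems are pulled back from one tautological
continuous cochain over a compact metrizable space, on which a `G`-system with a cochain is just an
invariant probability measure. Measures and closed subgroups of the circle range over compact
spaces, and being near a coboundary is an open condition on such pairs, because a near-primitive can
be taken continuous and rounded to the subgroup afterwards. On the other hand, property (T) gives a
spectral gap with a constant independent of the measure, and this uniform Poincaré inequality
characterizes ergodicity by closed conditions, so ergodicity survives weak-* limits. Hence the pairs
satisfying `‖α‖ ≤ r` form a compact set; those that are not near a coboundary fail, by the
coboundary theorem, to be cocycles along some relation, and finitely many relations with one `ε`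
suffice for all of them.
-/

open MeasureTheory Filter Topology
open scoped ENNReal

/-- Property (T) for the group `G` with respect to the finite generating set `S`: there is
`c > 0` such that any unitary representation with a `(S, c)`-invariant unit vector has a
nonzero invariant vector. -/
def HasPropertyT (G : Type*) [Group G] (S : Finset G) : Prop :=
  ∃ c : ℝ, 0 < c ∧
    ∀ (H : Type) (_ : NormedAddCommGroup H) (_ : InnerProductSpace ℂ H) (_ : CompleteSpace H),
      ∀ π : G →* (H ≃ₗᵢ[ℂ] H),
        (∃ v : H, ‖v‖ = 1 ∧ ∀ s ∈ S, ‖π s v - v‖ ≤ c) →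
        ∃ w : H, w ≠ 0 ∧ ∀ g : G, π g w = w

/-- A measure-preserving left action of `G` on `(X, μ)`. -/
def IsMPAction {G : Type*} [Group G] {X : Type*} [MeasurableSpace X]
    (T : G → X → X) (μ : Measure X) : Prop :=
  (∀ g, Measurable (T g)) ∧ (∀ g, Measure.map (T g) μ = μ) ∧
    T 1 = id ∧ ∀ g h, T (g * h) = T g ∘ T h

/-- Ergodicity: every strictly invariant measurable set is null or conull. -/
def IsErgodicAction {G : Type*} [Group G] {X : Type*} [MeasurableSpace X]
    (T : G → X → X) (μ : Measure X) : Prop :=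
  ∀ A : Set X, MeasurableSet A → (∀ g, T g ⁻¹' A = A) → μ A = 0 ∨ μ A = 1

/-- The sum `α(w, x)` of the cochain `α` along the word `w = s_ℓ ⋯ s_1` (the list is read with
its head the last letter applied): `α(w,x) = α(s_1,x) + α(s_2, T^{s_1}x) + ⋯`. -/
noncomputable def cocycleSum {G X : Type*} [Group G] (T : G → X → X)
    (α : G → X → UnitAddCircle) : List G → X → UnitAddCircle
  | [], _ => 0
  | s :: w, x => cocycleSum T α w x + α s (T w.prod x)

/-- `α` is a `K`-valued 1-cocycle over the system `(X, μ, T)` with respect to the generating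
set `S`: it is measurable, `K`-valued, and its 2-coboundary vanishes along every relation. -/
def IsCocycle {G : Type*} [Group G] {X : Type*} [MeasurableSpace X] (S : Finset G)
    (T : G → X → X) (μ : Measure X) (K : AddSubgroup UnitAddCircle)
    (α : G → X → UnitAddCircle) : Prop :=
  (∀ s ∈ S, Measurable (α s)) ∧ (∀ s ∈ S, ∀ x, α s x ∈ K) ∧
  ∀ w : List G, (∀ s ∈ w, s ∈ S) → w.prod = 1 → ∀ᵐ x ∂μ, cocycleSum T α w x = 0

section KazhdanPair

/-- `(S, c)` is a Kazhdan pair of `G`: every unitary representation with an `(S, c)`-invariant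
unit vector has a nonzero invariant vector. -/
def IsKazhdanPair {G : Type*} [Group G] (S : Finset G) (c : ℝ) : Prop :=
  ∀ (H : Type) (_ : NormedAddCommGroup H) (_ : InnerProductSpace ℂ H) (_ : CompleteSpace H),
    ∀ π : G →* (H ≃ₗᵢ[ℂ] H),
      (∃ v : H, ‖v‖ = 1 ∧ ∀ s ∈ S, ‖π s v - v‖ ≤ c) →
      ∃ w : H, w ≠ 0 ∧ ∀ g : G, π g w = w

/-- The unitary representation given by a representation by linear isometries; surjectivity is
automatic because `π g⁻¹` inverts `π g`. -/
def unitaryOfIsometries {G R E : Type*} [Group G] [Ring R] [SeminormedAddCommGroup E] [Module R E]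
    (π : G →* (E →ₗᵢ[R] E)) : G →* (E ≃ₗᵢ[R] E) where
  toFun g :=
    { __ := π g
      invFun := π g⁻¹
      left_inv := fun v ↦ show (π g⁻¹ * π g) v = v by simp [← map_mul]
      right_inv := fun v ↦ show (π g * π g⁻¹) v = v by simp [← map_mul] }
  map_one' := by ext v; exact congr($(map_one π) v)
  map_mul' g h := by ext v; exact congr($(map_mul π g h) v)

variable {G R H : Type*} [Group G]

/-- The subspace of vectors fixed by the representation `π`. -/
def invariantVectors [Ring R] [SeminormedAddCommGroup H] [Module R H]
    (π : G →* (H ≃ₗᵢ[R] H)) : Submodule R H where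
  carrier := {v | ∀ g, π g v = v}
  add_mem' hv hw g := by rw [map_add, hv g, hw g]
  zero_mem' g := map_zero (π g)
  smul_mem' a v hv g := by rw [map_smul, hv g]

variable [NormedAddCommGroup H] [InnerProductSpace ℂ H]

lemma apply_mem_orthogonal_invariantVectors (π : G →* (H ≃ₗᵢ[ℂ] H)) (g : G) {v : H}
    (hv : v ∈ (invariantVectors π)ᗮ) : π g v ∈ (invariantVectors π)ᗮ := by
  intro u hu
  rw [← hu g, LinearIsometryEquiv.inner_map_map]
  exact hv u hu

/-- The restriction of a unitary representation to the orthogonal complement of its invariant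
vectors. -/
noncomputable def orthogonalRepresentation (π : G →* (H ≃ₗᵢ[ℂ] H)) :
    G →* ((invariantVectors π)ᗮ ≃ₗᵢ[ℂ] (invariantVectors π)ᗮ) :=
  unitaryOfIsometries
    { toFun := fun g ↦
        { toLinearMap := (π g).toLinearEquiv.toLinearMap.restrict
            fun _ ↦ apply_mem_orthogonal_invariantVectors π g
          norm_map' := fun v ↦ (π g).norm_map v }
      map_one' := by ext v; exact congr($(map_one π) v)
      map_mul' := fun g h ↦ by ext v; exact congr($(map_mul π g h) v) }

lemma coe_orthogonalRepresentation (π : G →* (H ≃ₗᵢ[ℂ] H)) (g : G) (v : (invariantVectors π)ᗮ) :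
    (orthogonalRepresentation π g v : H) = π g v :=
  rfl

lemma invariantVectors_orthogonalRepresentation (π : G →* (H ≃ₗᵢ[ℂ] H)) :
    invariantVectors (orthogonalRepresentation π) = ⊥ := by
  refine (Submodule.eq_bot_iff _).2 fun v hv ↦ ?_
  have hinv : (v : H) ∈ invariantVectors π := fun g ↦ by
    rw [← coe_orthogonalRepresentation, hv g]
  exact Subtype.ext (inner_self_eq_zero.1 (v.2 v hinv))

theorem IsKazhdanPair.lt_norm_sub {H : Type} [NormedAddCommGroup H] [InnerProductSpace ℂ H]
    [CompleteSpace H] {S : Finset G} {c : ℝ} (hS : IsKazhdanPair S c) (π : G →* (H ≃ₗᵢ[ℂ] H))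
    {v : H} (hv : v ∈ (invariantVectors π)ᗮ) (hv0 : v ≠ 0) :
    ∃ s ∈ S, c * ‖v‖ < ‖π s v - v‖ := by
  by_contra! hle
  have hpos : 0 < ‖v‖ := norm_pos_iff.2 hv0
  let u : (invariantVectors π)ᗮ := ((‖v‖⁻¹ : ℝ) : ℂ) • ⟨v, hv⟩
  have hu : ‖u‖ = 1 := by simp [u, norm_smul, hpos.ne']
  have hmove : ∀ s ∈ S, ‖orthogonalRepresentation π s u - u‖ ≤ c := fun s hs ↦ by
    have : ‖orthogonalRepresentation π s u - u‖ = ‖v‖⁻¹ * ‖π s v - v‖ := by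
      rw [map_smul, ← smul_sub, norm_smul, Complex.norm_real, norm_inv, norm_norm]
      rfl
    rw [this, inv_mul_le_iff₀ hpos, mul_comm]
    exact hle s hs
  obtain ⟨w, hw0, hw⟩ := hS _ _ _ inferInstance (orthogonalRepresentation π) ⟨u, hu, hmove⟩
  have hw' : w ∈ invariantVectors (orthogonalRepresentation π) := hw
  rw [invariantVectors_orthogonalRepresentation] at hw'
  exact hw0 hw'

end KazhdanPair

section Koopman

open ProbabilityTheory

variable {G X : Type*} [Group G] [MeasurableSpace X] {μ : Measure X} {T : G → X → X}

namespace IsMPAction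

lemma measurePreserving (hT : IsMPAction T μ) (g : G) : MeasurePreserving (T g) μ μ :=
  ⟨hT.1 g, hT.2.1 g⟩

lemma one_apply (hT : IsMPAction T μ) (x : X) : T 1 x = x :=
  congrFun hT.2.2.1 x

lemma mul_apply (hT : IsMPAction T μ) (g h : G) (x : X) : T (g * h) x = T g (T h x) :=
  congrFun (hT.2.2.2 g h) x

/-- The Koopman representation `g ↦ (f ↦ f ∘ T g⁻¹)` on `L²(μ)`. -/
noncomputable def koopman (hT : IsMPAction T μ) : G →* (Lp ℂ 2 μ ≃ₗᵢ[ℂ] Lp ℂ 2 μ) :=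
  unitaryOfIsometries
    { toFun := fun g ↦ Lp.compMeasurePreservingₗᵢ ℂ (T g⁻¹) (hT.measurePreserving g⁻¹)
      map_one' := by
        ext1 f
        change Lp.compMeasurePreserving (T 1⁻¹) _ f = f
        simp only [inv_one, hT.2.2.1, Lp.compMeasurePreserving_id_apply]
      map_mul' := fun g h ↦ by
        ext1 f
        change Lp.compMeasurePreserving (T (g * h)⁻¹) _ f =
          Lp.compMeasurePreserving (T g⁻¹) _ (Lp.compMeasurePreserving (T h⁻¹) _ f)
        rw [← Lp.compMeasurePreserving_comp_apply]
        simp only [mul_inv_rev, hT.2.2.2] }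

lemma coeFn_koopman (hT : IsMPAction T μ) (g : G) (f : Lp ℂ 2 μ) :
    hT.koopman g f =ᵐ[μ] f ∘ T g⁻¹ :=
  Lp.coeFn_compMeasurePreserving f (hT.measurePreserving g⁻¹)

lemma koopman_toLp (hT : IsMPAction T μ) (g : G) {f : X → ℂ} (hf : MemLp f 2 μ) :
    hT.koopman g (hf.toLp f) =
      (hf.comp_measurePreserving (hT.measurePreserving g⁻¹)).toLp (f ∘ T g⁻¹) :=
  rfl

end IsMPAction

theorem IsErgodicAction.ae_eq_const_of_forall_comp_ae_eq [Countable G] [IsProbabilityMeasure μ]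
    {E : Type*} [MeasurableSpace E] [MeasurableSpace.CountablySeparated E] [Nonempty E]
    (hE : IsErgodicAction T μ) (hT : IsMPAction T μ) {f : X → E} (hf : Measurable f)
    (hinv : ∀ g, f ∘ T g =ᵐ[μ] f) : ∃ a, f =ᵐ[μ] Function.const X a := by
  refine exists_eventuallyEq_const_of_forall_separating MeasurableSet fun U hU ↦ ?_
  let A : Set X := ⋂ g, T g ⁻¹' (f ⁻¹' U)
  have hA : MeasurableSet A := .iInter fun g ↦ hT.1 g (hf hU)
  have hTA : ∀ g, T g ⁻¹' A = A := fun g ↦ by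
    ext x
    simp only [A, Set.mem_preimage, Set.mem_iInter, ← hT.mul_apply]
    exact (Equiv.mulRight g).forall_congr_left (p := fun h ↦ f (T (h * g) x) ∈ U) |>.trans
      (by simp)
  have hAU : ∀ᵐ x ∂μ, (x ∈ A ↔ f x ∈ U) := by
    filter_upwards [ae_all_iff.2 hinv] with x hx
    simp_all [A]
  rcases hE A hA hTA with h0 | h1
  · right
    filter_upwards [measure_eq_zero_iff_ae_notMem.1 h0, hAU] with x hx hiff
    exact hx ∘ hiff.2
  · left
    filter_upwards [(mem_ae_iff_prob_eq_one hA).2 h1, hAU] with x hx hiff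
    exact hiff.1 hx

lemma norm_toLp_sq {E : Type*} [NormedAddCommGroup E] {f : X → E} (hf : MemLp f 2 μ) :
    ‖hf.toLp f‖ ^ 2 = ∫ x, ‖f x‖ ^ 2 ∂μ := by
  rw [Lp.norm_toLp, toReal_eLpNorm hf.aestronglyMeasurable,
    lpNorm_eq_integral_norm_rpow_toReal two_ne_zero ENNReal.ofNat_ne_top hf.aestronglyMeasurable]
  simpa using Real.rpow_inv_natCast_pow (integral_nonneg fun x ↦ by positivity) two_ne_zero

theorem IsErgodicAction.ae_eq_const_of_mem_invariantVectors [Countable G] [IsProbabilityMeasure μ]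
    (hE : IsErgodicAction T μ) (hT : IsMPAction T μ) {w : Lp ℂ 2 μ}
    (hw : w ∈ invariantVectors hT.koopman) : ∃ a, w =ᵐ[μ] Function.const X a := by
  refine hE.ae_eq_const_of_forall_comp_ae_eq hT (Lp.stronglyMeasurable w).measurable fun g ↦ ?_
  have h := hT.coeFn_koopman g⁻¹ w
  rw [hw g⁻¹, inv_inv] at h
  exact h.symm

lemma IsErgodicAction.toLp_mem_orthogonal_invariantVectors [Countable G] [IsProbabilityMeasure μ]
    (hE : IsErgodicAction T μ) (hT : IsMPAction T μ) {f : X → ℂ} (hf : MemLp f 2 μ)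
    (hf0 : ∫ x, f x ∂μ = 0) : hf.toLp f ∈ (invariantVectors hT.koopman)ᗮ := by
  intro w hw
  obtain ⟨a, ha⟩ := hE.ae_eq_const_of_mem_invariantVectors hT hw
  calc inner ℂ w (hf.toLp f) = ∫ x, f x * (starRingEnd ℂ) a ∂μ := by
        rw [L2.inner_def]
        refine integral_congr_ae ?_
        filter_upwards [ha, hf.coeFn_toLp] with x hwx hfx
        rw [hwx, hfx]
        rfl
    _ = 0 := by rw [integral_mul_const, hf0, zero_mul]

theorem IsKazhdanPair.sq_mul_variance_le [Countable G] {S : Finset G} {c : ℝ}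
    (hS : IsKazhdanPair S c) (hc : 0 ≤ c) {X : Type} [MeasurableSpace X] {μ : Measure X}
    [IsProbabilityMeasure μ] {T : G → X → X} (hT : IsMPAction T μ) (hE : IsErgodicAction T μ)
    {f : X → ℝ} (hf : MemLp f 2 μ) :
    c ^ 2 * Var[f; μ] ≤ ∑ s ∈ S, ∫ x, (f (T s⁻¹ x) - f x) ^ 2 ∂μ := by
  have hv : MemLp (fun x ↦ ((f x - μ[f] : ℝ) : ℂ)) 2 μ := (hf.sub (memLp_const _)).ofReal
  set v := hv.toLp
  have hvar : ‖v‖ ^ 2 = Var[f; μ] := by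
    simp only [v, norm_toLp_sq, Complex.norm_real, Real.norm_eq_abs, sq_abs,
      variance_eq_integral hf.aemeasurable]
  have hmove (s : G) : ‖hT.koopman s v - v‖ ^ 2 = ∫ x, (f (T s⁻¹ x) - f x) ^ 2 ∂μ := by
    rw [hT.koopman_toLp, ← MemLp.toLp_sub, norm_toLp_sq]
    simp only [Pi.sub_apply, Function.comp_apply, ← Complex.ofReal_sub, sub_sub_sub_cancel_right,
      Complex.norm_real, Real.norm_eq_abs, sq_abs]
  have hnonneg (s : G) : 0 ≤ ∫ x, (f (T s⁻¹ x) - f x) ^ 2 ∂μ :=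
    integral_nonneg fun x ↦ sq_nonneg _
  rcases eq_or_ne v 0 with hv0 | hv0
  · rw [← hvar, hv0, norm_zero]
    simpa using Finset.sum_nonneg fun s _ ↦ hnonneg s
  have hmean : ∫ x, ((f x - μ[f] : ℝ) : ℂ) ∂μ = 0 := by
    rw [integral_complex_ofReal, integral_sub (hf.integrable one_le_two) (integrable_const _)]
    simp
  obtain ⟨s, hs, hlt⟩ := hS.lt_norm_sub hT.koopman
    (hE.toLp_mem_orthogonal_invariantVectors hT hv hmean) hv0
  calc c ^ 2 * Var[f; μ] = (c * ‖v‖) ^ 2 := by rw [mul_pow, hvar]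
    _ ≤ ‖hT.koopman s v - v‖ ^ 2 := by gcongr
    _ = ∫ x, (f (T s⁻¹ x) - f x) ^ 2 ∂μ := hmove s
    _ ≤ ∑ s ∈ S, ∫ x, (f (T s⁻¹ x) - f x) ^ 2 ∂μ :=
      Finset.single_le_sum (f := fun s ↦ ∫ x, (f (T s⁻¹ x) - f x) ^ 2 ∂μ)
        (fun s _ ↦ hnonneg s) hs

end Koopman

section WeakLimits

open ProbabilityTheory TopologicalSpace

lemma variance_le_two_mul_add_two_mul {Ω : Type*} [MeasurableSpace Ω] {μ : Measure Ω}
    [IsProbabilityMeasure μ] {X Y : Ω → ℝ} (hX : MemLp X 2 μ) (hY : MemLp Y 2 μ) :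
    Var[X; μ] ≤ 2 * ∫ ω, (X ω - Y ω) ^ 2 ∂μ + 2 * Var[Y; μ] := by
  have hXY : MemLp (X - Y) 2 μ := hX.sub hY
  have hparallelogram : Var[X; μ] + Var[X - Y - Y; μ] = 2 * Var[X - Y; μ] + 2 * Var[Y; μ] := by
    have hadd := variance_add hXY hY
    rw [sub_add_cancel] at hadd
    rw [hadd, variance_sub hXY hY]
    ring
  have hsq : Var[X - Y; μ] ≤ ∫ ω, (X ω - Y ω) ^ 2 ∂μ :=
    variance_le_expectation_sq hXY.aestronglyMeasurable
  linarith [variance_nonneg (X - Y - Y) μ]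

lemma integral_comp_measurePreserving {X Y E : Type*} [MeasurableSpace X] [MeasurableSpace Y]
    [NormedAddCommGroup E] [NormedSpace ℝ E] {μ : Measure X} {ν : Measure Y} {φ : X → Y}
    (hφ : MeasurePreserving φ μ ν) {f : Y → E} (hf : AEStronglyMeasurable f ν) :
    ∫ x, f (φ x) ∂μ = ∫ y, f y ∂ν := by
  rw [← hφ.map_eq] at hf ⊢
  exact (integral_map hφ.aemeasurable hf).symm

lemma integral_sq_comp_sub_le {Ω : Type*} [MeasurableSpace Ω] {μ : Measure Ω} {φ : Ω → Ω}
    (hφ : MeasurePreserving φ μ μ) {f : Ω → ℝ} (hf : MemLp f 2 μ) :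
    ∫ ω, (f (φ ω) - f ω) ^ 2 ∂μ ≤ 4 * ∫ ω, f ω ^ 2 ∂μ := by
  have hcomp : Integrable (fun ω ↦ f (φ ω) ^ 2) μ := (hf.comp_measurePreserving hφ).integrable_sq
  have hshift : ∫ ω, f (φ ω) ^ 2 ∂μ = ∫ ω, f ω ^ 2 ∂μ :=
    integral_comp_measurePreserving hφ (hf.aestronglyMeasurable.pow 2)
  calc ∫ ω, (f (φ ω) - f ω) ^ 2 ∂μ
      ≤ ∫ ω, (2 * f (φ ω) ^ 2 + 2 * f ω ^ 2) ∂μ :=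
        integral_mono ((hf.comp_measurePreserving hφ).sub hf).integrable_sq
          ((hcomp.const_mul 2).add (hf.integrable_sq.const_mul 2))
          fun ω ↦ by nlinarith [sq_nonneg (f (φ ω) + f ω)]
    _ = 4 * ∫ ω, f ω ^ 2 ∂μ := by
        rw [integral_add (hcomp.const_mul 2) (hf.integrable_sq.const_mul 2), integral_const_mul,
          integral_const_mul, hshift]
        ring

variable {G Y : Type*} [Group G] [TopologicalSpace Y] [MeasurableSpace Y] [BorelSpace Y]
  {T : G → Y → Y}

open scoped BoundedContinuousFunction

lemma memLp_boundedContinuousFunction (μ : Measure Y) [IsFiniteMeasure μ] (f : Y →ᵇ ℝ)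
    (p : ℝ≥0∞) : MemLp f p μ :=
  .of_bound f.continuous.aestronglyMeasurable ‖f‖ (.of_forall f.norm_coe_le_norm)

section Poincare

variable [NormalSpace Y] {μ : Measure Y} [IsProbabilityMeasure μ] [μ.WeaklyRegular]
  {S : Finset G} {κ : ℝ}

theorem variance_eq_zero_of_invariant (hT : IsMPAction T μ) (hκ : 0 < κ)
    (hpoincare : ∀ f : Y →ᵇ ℝ, κ * Var[f; μ] ≤ ∑ s ∈ S, ∫ y, (f (T s⁻¹ y) - f y) ^ 2 ∂μ)
    {f : Y → ℝ} (hf : MemLp f 2 μ) (hinv : ∀ g y, f (T g y) = f y) : Var[f; μ] = 0 := by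
  refine le_antisymm (le_of_forall_pos_le_add fun ε hε ↦ ?_) (variance_nonneg f μ)
  let C : ℝ := 2 * κ + 8 * S.card
  have hC : 0 < C := by positivity
  obtain ⟨f', hf', -⟩ := (show MemLp f (ENNReal.ofReal 2) μ by simpa using hf)
    |>.exists_boundedContinuous_integral_rpow_sub_le two_pos (ε := κ * ε / C) (by positivity)
  simp only [Real.rpow_two, Real.norm_eq_abs, sq_abs] at hf'
  have hf'L := memLp_boundedContinuousFunction μ f' 2
  have hmove (s : G) : ∫ y, (f' (T s⁻¹ y) - f' y) ^ 2 ∂μ ≤ 4 * (κ * ε / C) := calc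
    _ = ∫ y, ((f - f') (T s⁻¹ y) - (f - f') y) ^ 2 ∂μ := by
        congr! 2 with y
        rw [Pi.sub_apply, Pi.sub_apply, hinv]
        ring
    _ ≤ 4 * ∫ y, (f y - f' y) ^ 2 ∂μ :=
        integral_sq_comp_sub_le (hT.measurePreserving s⁻¹) (hf.sub hf'L)
    _ ≤ 4 * (κ * ε / C) := by gcongr
  have hmul : κ * Var[f; μ] ≤ κ * ε := calc
    κ * Var[f; μ] ≤ κ * (2 * ∫ y, (f y - f' y) ^ 2 ∂μ + 2 * Var[f'; μ]) := by
        gcongr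
        exact variance_le_two_mul_add_two_mul hf hf'L
    _ ≤ 2 * κ * (κ * ε / C) + 2 * ∑ s ∈ S, ∫ y, (f' (T s⁻¹ y) - f' y) ^ 2 ∂μ := by
        nlinarith [hpoincare f']
    _ ≤ 2 * κ * (κ * ε / C) + 2 * ∑ _s ∈ S, 4 * (κ * ε / C) := by
        gcongr with s
        exact hmove s
    _ = κ * ε := by
        rw [Finset.sum_const, nsmul_eq_mul]
        field_simp
        simp only [C]
        ring
  simpa using le_of_mul_le_mul_left hmul hκ

theorem isErgodicAction_of_mul_variance_le (hT : IsMPAction T μ) (hκ : 0 < κ)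
    (hpoincare : ∀ f : Y →ᵇ ℝ, κ * Var[f; μ] ≤ ∑ s ∈ S, ∫ y, (f (T s⁻¹ y) - f y) ^ 2 ∂μ) :
    IsErgodicAction T μ := by
  intro A hA hTA
  have hinv (g : G) (y : Y) : A.indicator (1 : Y → ℝ) (T g y) = A.indicator 1 y := by
    classical
    simp only [Set.indicator_apply, Pi.one_apply]
    exact if_congr (Set.ext_iff.1 (hTA g) y) rfl rfl
  have hvar := variance_eq_zero_of_invariant hT hκ hpoincare
    (memLp_indicator_const 2 hA (1 : ℝ) (.inr (measure_ne_top μ A))) hinv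
  have hmeas : μ.real A - μ.real A ^ 2 = 0 := by
    rw [← integral_indicator_one hA, ← hvar,
      variance_eq_sub (memLp_indicator_const 2 hA (1 : ℝ) (.inr (measure_ne_top μ A)))]
    congr 2
    ext y
    by_cases hy : y ∈ A <;> simp [hy]
  have hroots : μ.real A * (1 - μ.real A) = 0 := by linarith
  rcases mul_eq_zero.1 hroots with h0 | h1
  · exact .inl ((measureReal_eq_zero_iff).1 h0)
  · exact .inr ((ENNReal.toReal_eq_one_iff _).1 (sub_eq_zero.1 h1).symm)

end Poincare

lemma isClosed_setOf_isMPAction [HasOuterApproxClosed Y] (hTc : ∀ g, Continuous (T g)) :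
    IsClosed {μ : ProbabilityMeasure Y | IsMPAction T (μ : Measure Y)} := by
  have heq : {μ : ProbabilityMeasure Y | IsMPAction T (μ : Measure Y)} =
      (⋂ g, {μ | μ.map (hTc g).aemeasurable = μ}) ∩
        {_μ | T 1 = id ∧ ∀ g h, T (g * h) = T g ∘ T h} := by
    ext μ
    simp only [IsMPAction, (hTc _).measurable, implies_true, true_and, Set.mem_ofPred_eq,
      Set.mem_inter_iff, Set.mem_iInter, ← ProbabilityMeasure.toMeasure_injective.eq_iff,
      ProbabilityMeasure.toMeasure_map]
  rw [heq]
  exact (isClosed_iInter fun g ↦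
    isClosed_eq (ProbabilityMeasure.continuous_map (hTc g)) continuous_id).inter isClosed_const

lemma continuous_variance (f : Y →ᵇ ℝ) :
    Continuous fun μ : ProbabilityMeasure Y ↦ Var[f; μ] := by
  simp_rw [fun μ : ProbabilityMeasure Y ↦
    variance_eq_sub (memLp_boundedContinuousFunction (μ : Measure Y) f 2)]
  exact (ProbabilityMeasure.continuous_integral_boundedContinuousFunction (f ^ 2)).sub
    ((ProbabilityMeasure.continuous_integral_boundedContinuousFunction f).pow 2)

theorem IsKazhdanPair.isClosed_setOf_isErgodicAction {Y : Type} [TopologicalSpace Y]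
    [PseudoMetrizableSpace Y] [MeasurableSpace Y] [BorelSpace Y] [Countable G] {T : G → Y → Y}
    {S : Finset G} {c : ℝ} (hS : IsKazhdanPair S c) (hc : 0 < c) (hTc : ∀ g, Continuous (T g)) :
    IsClosed {μ : ProbabilityMeasure Y |
      IsMPAction T (μ : Measure Y) ∧ IsErgodicAction T (μ : Measure Y)} := by
  have heq : {μ : ProbabilityMeasure Y |
        IsMPAction T (μ : Measure Y) ∧ IsErgodicAction T (μ : Measure Y)} =
      {μ : ProbabilityMeasure Y | IsMPAction T (μ : Measure Y)} ∩ ⋂ f : Y →ᵇ ℝ,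
        {μ | c ^ 2 * Var[f; μ] ≤ ∑ s ∈ S, ∫ y, (f (T s⁻¹ y) - f y) ^ 2 ∂μ} := by
    ext μ
    simp only [Set.mem_inter_iff, Set.mem_iInter, Set.mem_ofPred_eq, and_congr_right_iff]
    exact fun hT ↦ ⟨fun hE f ↦ hS.sq_mul_variance_le hc.le hT hE
        (memLp_boundedContinuousFunction (μ : Measure Y) f 2),
      isErgodicAction_of_mul_variance_le hT (pow_pos hc 2)⟩
  rw [heq]
  refine (isClosed_setOf_isMPAction hTc).inter (isClosed_iInter fun f ↦ isClosed_le
    (continuous_const.mul (continuous_variance f)) (continuous_finsetSum S fun s _ ↦ ?_))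
  exact ProbabilityMeasure.continuous_integral_boundedContinuousFunction
    ((f.compContinuous ⟨T s⁻¹, hTc s⁻¹⟩ - f) ^ 2)

end WeakLimits

section ClosedSubgroups

open Metric TopologicalSpace

variable {A : Type*} [SeminormedAddCommGroup A]

lemma infDist_sub_le_infDist_add_infDist (K : AddSubgroup A) (x y : A) :
    infDist (x - y) (K : Set A) ≤ infDist x (K : Set A) + infDist y (K : Set A) := by
  have hne : (K : Set A).Nonempty := ⟨0, K.zero_mem⟩
  refine le_of_forall_pos_le_add fun ε hε ↦ ?_
  obtain ⟨k, hk, hxk⟩ := (infDist_lt_iff hne).1 (lt_add_of_pos_right (infDist x K) (half_pos hε))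
  obtain ⟨l, hl, hyl⟩ := (infDist_lt_iff hne).1 (lt_add_of_pos_right (infDist y K) (half_pos hε))
  calc infDist (x - y) (K : Set A) ≤ dist (x - y) (k - l) :=
        infDist_le_dist_of_mem (K.sub_mem hk hl)
    _ ≤ dist x k + dist y l := dist_sub_sub_le x y k l
    _ ≤ infDist x (K : Set A) + infDist y (K : Set A) + ε := by linarith

lemma exists_addSubgroup_coe_eq_iff {L : Set A} (hL : IsClosed L) (hne : L.Nonempty) :
    (∃ K : AddSubgroup A, (K : Set A) = L) ↔
      ∀ x y, infDist (x - y) L ≤ infDist x L + infDist y L := by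
  constructor
  · rintro ⟨K, rfl⟩
    exact infDist_sub_le_infDist_add_infDist K
  · intro hsub
    have hmem : ∀ x ∈ L, ∀ y ∈ L, x + -y ∈ L := fun x hx y hy ↦ by
      have h := hsub x y
      rw [infDist_zero_of_mem hx, infDist_zero_of_mem hy, add_zero] at h
      rw [← sub_eq_add_neg, hL.mem_iff_infDist_zero hne]
      exact h.antisymm infDist_nonneg
    exact ⟨.ofSub L hne hmem, rfl⟩

lemma isClosed_setOf_addSubgroup {A : Type*} [NormedAddCommGroup A] :
    IsClosed {L : NonemptyCompacts A | ∃ K : AddSubgroup A, (K : Set A) = L} := by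
  have hcont (x : A) : Continuous fun L : NonemptyCompacts A ↦ infDist x L :=
    (lipschitz_infDist_set x).continuous
  simp only [fun L : NonemptyCompacts A ↦
    exists_addSubgroup_coe_eq_iff L.isCompact.isClosed L.nonempty, Set.ofPred_forall]
  exact isClosed_iInter fun x ↦ isClosed_iInter fun y ↦
    isClosed_le (hcont _) ((hcont x).add (hcont y))

lemma exists_measurable_dist_le_infDist_add {M : Type*} [PseudoMetricSpace M] [MeasurableSpace M]
    [OpensMeasurableSpace M] {K : Set M} [SeparableSpace K] (hK : K.Nonempty) {δ : ℝ} (hδ : 0 < δ) :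
    ∃ ρ : M → M, Measurable ρ ∧ (∀ x, ρ x ∈ K) ∧ ∀ x, dist x (ρ x) ≤ infDist x K + δ := by
  classical
  have : Nonempty K := hK.to_subtype
  let d : ℕ → K := denseSeq K
  have hex (x : M) : ∃ n, dist x (d n) < infDist x K + δ := by
    obtain ⟨k, hk, hlt⟩ := (infDist_lt_iff hK).1 (lt_add_of_pos_right (infDist x K) hδ)
    have hopen : IsOpen {k : K | dist x k < infDist x K + δ} :=
      isOpen_lt (by fun_prop) continuous_const
    exact (denseRange_denseSeq K).exists_mem_open hopen ⟨⟨k, hk⟩, hlt⟩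
  have hfind : Measurable fun x ↦ Nat.find (hex x) := measurable_find hex fun n ↦
    (isOpen_lt (by fun_prop) ((continuous_infDist_pt K).add continuous_const)).measurableSet
  exact ⟨fun x ↦ d (Nat.find (hex x)),
    (measurable_from_top (f := fun n ↦ (d n : M))).comp hfind,
    fun x ↦ (d _).2, fun x ↦ (Nat.find_spec (hex x)).le⟩

end ClosedSubgroups

section Circle

lemma exists_continuous_integral_norm_sub_le {p : ℝ} [Fact (0 < p)] {Y : Type*}
    [TopologicalSpace Y] [NormalSpace Y] [MeasurableSpace Y] [BorelSpace Y] {μ : Measure Y}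
    [IsFiniteMeasure μ] [μ.WeaklyRegular] {β : Y → AddCircle p} (hβ : Measurable β)
    {δ : ℝ} (hδ : 0 < δ) : ∃ b : Y → AddCircle p, Continuous b ∧ ∫ y, ‖β y - b y‖ ∂μ ≤ δ := by
  let lift : Y → ℝ := fun y ↦ AddCircle.measurableEquivIoc p 0 (β y)
  have hlift (y : Y) : (lift y : AddCircle p) = β y :=
    (AddCircle.measurableEquivIoc p 0).symm_apply_apply (β y)
  have hbound (y : Y) : ‖lift y‖ ≤ p := by
    obtain ⟨h0, hp⟩ := (AddCircle.measurableEquivIoc p 0 (β y)).2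
    exact (abs_of_pos h0).trans_le (hp.trans_eq (zero_add p))
  have hint : Integrable lift μ := .of_bound
    (measurable_subtype_coe.comp ((AddCircle.measurableEquivIoc p 0).measurable.comp hβ)
      |>.aestronglyMeasurable) p (.of_forall hbound)
  obtain ⟨f, hf, hfint⟩ := hint.exists_boundedContinuous_integral_sub_le hδ
  refine ⟨fun y ↦ (f y : AddCircle p), (AddCircle.continuous_mk' p).comp f.continuous, ?_⟩
  refine (integral_mono_of_nonneg (.of_forall fun y ↦ norm_nonneg _) (hint.sub hfint).norm
    (.of_forall fun y ↦ ?_)).trans hf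
  simp only [← hlift, ← AddCircle.coe_sub]
  exact QuotientAddGroup.norm_mk_le_norm

end Circle

section Cochains

lemma continuous_integral_of_continuous_uncurry {Y Z : Type*} [TopologicalSpace Y] [CompactSpace Y]
    [MeasurableSpace Y] [BorelSpace Y] [TopologicalSpace Z] {F : Z → Y → ℝ}
    (hF : Continuous (Function.uncurry F)) :
    Continuous fun p : ProbabilityMeasure Y × Z ↦ ∫ y, F p.2 y ∂p.1 := by
  let f : C(Z, BoundedContinuousFunction Y ℝ) :=
    (⟨BoundedContinuousFunction.mkOfCompact,
      (ContinuousMap.isometryEquivBoundedOfCompact Y ℝ).continuous⟩ : C(C(Y, ℝ), _)).comp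
      (ContinuousMap.curry ⟨_, hF⟩)
  refine continuous_iff_continuousAt.2 fun ⟨μ₀, z₀⟩ ↦ ?_
  have hsplit (p : ProbabilityMeasure Y × Z) :
      ∫ y, F p.2 y ∂p.1 = ∫ y, (f p.2 - f z₀) y ∂p.1 + ∫ y, f z₀ y ∂p.1 := by
    rw [← integral_add ((f p.2 - f z₀).integrable _) ((f z₀).integrable _)]
    simp only [BoundedContinuousFunction.coe_sub, Pi.sub_apply, sub_add_cancel]
    rfl
  have hdiff : Tendsto (fun p : ProbabilityMeasure Y × Z ↦ ∫ y, (f p.2 - f z₀) y ∂p.1)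
      (𝓝 (μ₀, z₀)) (𝓝 0) := by
    have hnorm : Continuous fun p : ProbabilityMeasure Y × Z ↦ ‖f p.2 - f z₀‖ := by fun_prop
    refine squeeze_zero_norm (fun p ↦ (f p.2 - f z₀).norm_integral_le_norm _) ?_
    simpa using hnorm.tendsto (μ₀, z₀)
  have hfix : Tendsto (fun p : ProbabilityMeasure Y × Z ↦ ∫ y, f z₀ y ∂p.1) (𝓝 (μ₀, z₀))
      (𝓝 (∫ y, F z₀ y ∂μ₀)) :=
    ((ProbabilityMeasure.continuous_integral_boundedContinuousFunction (f z₀)).comp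
      continuous_fst).tendsto (μ₀, z₀)
  simpa only [ContinuousAt, ← hsplit, zero_add] using hdiff.add hfix

lemma integrable_of_measurable_of_compactSpace {X A : Type*} [MeasurableSpace X] {μ : Measure X}
    [IsFiniteMeasure μ] [NormedAddCommGroup A] [CompactSpace A] [MeasurableSpace A] [BorelSpace A]
    {f : X → A} (hf : Measurable f) : Integrable f μ := by
  obtain ⟨C, hC⟩ := (isCompact_univ (X := A)).isBounded.exists_norm_le
  exact .of_bound hf.aestronglyMeasurable C (.of_forall fun x ↦ hC (f x) trivial)

variable {G X A : Type*}

/-- The coboundary `dβ(g, x) = β(T^g x) - β(x)`. -/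
def coboundary [Sub A] (T : G → X → X) (β : X → A) : G → X → A :=
  fun g x ↦ β (T g x) - β x

/-- The `L¹`-norm `‖α‖_{μ,S}` of a cochain. -/
noncomputable def cochainNorm [MeasurableSpace X] [Norm A] (S : Finset G) (μ : Measure X)
    (α : G → X → A) : ℝ :=
  ∑ s ∈ S, ∫ x, ‖α s x‖ ∂μ

/-- `α` is at `S`-norm distance less than `r` from the coboundary of a `K`-valued map. -/
def IsNearCoboundary [MeasurableSpace X] [MeasurableSpace A] [NormedAddCommGroup A]
    (S : Finset G) (T : G → X → X) (μ : Measure X) (K : AddSubgroup A) (r : ℝ)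
    (α : G → X → A) : Prop :=
  ∃ β : X → A, Measurable β ∧ (∀ x, β x ∈ K) ∧ cochainNorm S μ (α - coboundary T β) < r

lemma continuous_integral_norm [TopologicalSpace X] [CompactSpace X] [MeasurableSpace X]
    [BorelSpace X] [SeminormedAddCommGroup A] {f : X → A} (hf : Continuous f) :
    Continuous fun μ : ProbabilityMeasure X ↦ ∫ x, ‖f x‖ ∂μ :=
  ProbabilityMeasure.continuous_integral_boundedContinuousFunction
    (BoundedContinuousFunction.mkOfCompact ⟨fun x ↦ ‖f x‖, hf.norm⟩)

lemma continuous_cochainNorm [TopologicalSpace X] [CompactSpace X] [MeasurableSpace X]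
    [BorelSpace X] [SeminormedAddCommGroup A] {S : Finset G} {α : G → X → A}
    (hα : ∀ s ∈ S, Continuous (α s)) :
    Continuous fun μ : ProbabilityMeasure X ↦ cochainNorm S (μ : Measure X) α :=
  continuous_finsetSum S fun s hs ↦ continuous_integral_norm (hα s hs)

lemma cochainNorm_congr_ae [MeasurableSpace X] [Norm A] {S : Finset G} {μ : Measure X}
    {α α' : G → X → A} (h : ∀ s ∈ S, α s =ᵐ[μ] α' s) : cochainNorm S μ α = cochainNorm S μ α' :=
  Finset.sum_congr rfl fun s hs ↦ integral_congr_ae ((h s hs).fun_comp norm)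

variable [Group G] [MeasurableSpace X] [NormedAddCommGroup A] [CompactSpace A] [MeasurableSpace A]
  [BorelSpace A] {S : Finset G} {μ : Measure X} {T : G → X → X}

lemma cochainNorm_sub_coboundary_le [IsFiniteMeasure μ] (hT : IsMPAction T μ) {α : G → X → A}
    (hα : ∀ s ∈ S, Measurable (α s)) {β β' : X → A} (hβ : Measurable β) (hβ' : Measurable β') :
    cochainNorm S μ (α - coboundary T β') ≤
      cochainNorm S μ (α - coboundary T β) + 2 * S.card * ∫ x, ‖β x - β' x‖ ∂μ := by
  have hdiff : Integrable (fun x ↦ ‖β x - β' x‖) μ :=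
    (integrable_of_measurable_of_compactSpace (hβ.sub hβ')).norm
  have hterm (s : G) (hs : s ∈ S) : ∫ x, ‖(α - coboundary T β') s x‖ ∂μ ≤
      ∫ x, ‖(α - coboundary T β) s x‖ ∂μ + 2 * ∫ x, ‖β x - β' x‖ ∂μ := by
    have hint {γ : X → A} (hγ : Measurable γ) :
        Integrable (fun x ↦ ‖(α - coboundary T γ) s x‖) μ :=
      (integrable_of_measurable_of_compactSpace ((hα s hs).sub ((hγ.comp (hT.1 s)).sub hγ))).norm
    have hshift : Integrable (fun x ↦ ‖β (T s x) - β' (T s x)‖) μ :=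
      (hT.measurePreserving s).integrable_comp_of_integrable hdiff
    have hsum : Integrable (fun x ↦ ‖β (T s x) - β' (T s x)‖ + ‖β x - β' x‖) μ := hshift.add hdiff
    calc ∫ x, ‖(α - coboundary T β') s x‖ ∂μ
        ≤ ∫ x, (‖(α - coboundary T β) s x‖ + (‖β (T s x) - β' (T s x)‖ + ‖β x - β' x‖)) ∂μ := by
          refine integral_mono (hint hβ') ((hint hβ).add hsum) fun x ↦ ?_
          have : (α - coboundary T β') s x = (α - coboundary T β) s x +
              ((β (T s x) - β' (T s x)) - (β x - β' x)) := by
            simp only [coboundary, Pi.sub_apply]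
            abel
          rw [this]
          exact (norm_add_le _ _).trans (by gcongr; exact norm_sub_le _ _)
      _ = ∫ x, ‖(α - coboundary T β) s x‖ ∂μ + 2 * ∫ x, ‖β x - β' x‖ ∂μ := by
          rw [integral_add (hint hβ) hsum, integral_add hshift hdiff,
            integral_comp_measurePreserving (hT.measurePreserving s) hdiff.aestronglyMeasurable,
            two_mul]
  calc cochainNorm S μ (α - coboundary T β')
      ≤ ∑ s ∈ S, (∫ x, ‖(α - coboundary T β) s x‖ ∂μ + 2 * ∫ x, ‖β x - β' x‖ ∂μ) :=
        Finset.sum_le_sum hterm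
    _ = cochainNorm S μ (α - coboundary T β) + 2 * S.card * ∫ x, ‖β x - β' x‖ ∂μ := by
        rw [Finset.sum_add_distrib, Finset.sum_const, nsmul_eq_mul, cochainNorm]
        ring

end Cochains

section Cocycles

variable {G : Type*} [Group G]

lemma continuous_cocycleSum {Y : Type*} [TopologicalSpace Y] {T : G → Y → Y}
    (hTc : ∀ g, Continuous (T g)) {α : G → Y → UnitAddCircle} {w : List G}
    (hα : ∀ s ∈ w, Continuous (α s)) : Continuous (cocycleSum T α w) := by
  induction w with
  | nil => exact continuous_const
  | cons s w ih =>
    rw [List.forall_mem_cons] at hα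
    exact (ih hα.2).add (hα.1.comp (hTc _))

variable {X : Type*} [MeasurableSpace X] {μ : Measure X} {S : Finset G} {T : G → X → X}

lemma cocycleSum_ae_eq (hT : IsMPAction T μ) {α α' : G → X → UnitAddCircle} {w : List G}
    (h : ∀ s ∈ w, α s =ᵐ[μ] α' s) : cocycleSum T α w =ᵐ[μ] cocycleSum T α' w := by
  induction w with
  | nil => rfl
  | cons s w ih =>
    rw [List.forall_mem_cons] at h
    exact (ih h.2).add ((hT.measurePreserving w.prod).quasiMeasurePreserving.ae_eq_comp h.1)

lemma exists_isCocycle_ae_eq (hT : IsMPAction T μ) {K : AddSubgroup UnitAddCircle}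
    (hK : IsClosed (K : Set UnitAddCircle)) {α : G → X → UnitAddCircle}
    (hα : ∀ s ∈ S, Measurable (α s)) (hαK : ∀ s ∈ S, ∀ᵐ x ∂μ, α s x ∈ K)
    (hsum : ∀ w : List G, (∀ s ∈ w, s ∈ S) → w.prod = 1 → ∀ᵐ x ∂μ, cocycleSum T α w x = 0) :
    ∃ α' : G → X → UnitAddCircle, IsCocycle S T μ K α' ∧ ∀ s ∈ S, α' s =ᵐ[μ] α s := by
  classical
  let α' : G → X → UnitAddCircle := fun s x ↦ if α s x ∈ K then α s x else 0
  have heq : ∀ s ∈ S, α' s =ᵐ[μ] α s := fun s hs ↦ by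
    filter_upwards [hαK s hs] with x hx using if_pos hx
  refine ⟨α', ⟨fun s hs ↦ ?_, fun s _ x ↦ ?_, fun w hwS hw ↦ ?_⟩, heq⟩
  · exact .ite (hα s hs hK.measurableSet) (hα s hs) measurable_const
  · by_cases hx : α s x ∈ K
    · simpa only [α', if_pos hx] using hx
    · simpa only [α', if_neg hx] using K.zero_mem
  · exact (cocycleSum_ae_eq hT fun s hs ↦ heq s (hwS s hs)).trans (hsum w hwS hw)

end Cocycles

section NearCoboundary

open Metric TopologicalSpace

lemma integrable_infDist {X : Type*} [MeasurableSpace X] {μ : Measure X} [IsFiniteMeasure μ] {p : ℝ}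
    [Fact (0 < p)] (K : AddSubgroup (AddCircle p)) {b : X → AddCircle p} (hb : Measurable b) :
    Integrable (fun y ↦ infDist (b y) (K : Set (AddCircle p))) μ :=
  (integrable_of_measurable_of_compactSpace hb).norm.mono'
    ((continuous_infDist_pt _).measurable.comp hb).aestronglyMeasurable <| .of_forall fun y ↦ by
      rw [Real.norm_of_nonneg infDist_nonneg, ← dist_zero_right]
      exact infDist_le_dist_of_mem K.zero_mem

lemma integral_infDist_eq_zero_iff {X : Type*} [MeasurableSpace X] {μ : Measure X}
    [IsFiniteMeasure μ] {p : ℝ} [Fact (0 < p)] {K : AddSubgroup (AddCircle p)}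
    (hK : IsClosed (K : Set (AddCircle p))) {b : X → AddCircle p} (hb : Measurable b) :
    ∫ x, infDist (b x) (K : Set (AddCircle p)) ∂μ = 0 ↔ ∀ᵐ x ∂μ, b x ∈ K := by
  rw [integral_eq_zero_iff_of_nonneg (fun x ↦ infDist_nonneg) (integrable_infDist K hb)]
  exact eventually_congr <| .of_forall fun x ↦ (hK.mem_iff_infDist_zero ⟨0, K.zero_mem⟩).symm

lemma continuous_integral_infDist {Y A : Type*} [TopologicalSpace Y] [CompactSpace Y]
    [MeasurableSpace Y] [BorelSpace Y] [MetricSpace A] {b : Y → A} (hb : Continuous b) :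
    Continuous fun q : ProbabilityMeasure Y × NonemptyCompacts A ↦
      ∫ y, infDist (b y) (q.2 : Set A) ∂q.1 := by
  let F : NonemptyCompacts A → Y → ℝ := fun L y ↦ infDist (b y) (L : Set A)
  have hF : Continuous (Function.uncurry F) :=
    (lipschitz_infDist (α := A)).continuous.comp₂ (hb.comp continuous_snd) continuous_fst
  exact continuous_integral_of_continuous_uncurry hF

/-- An upper bound, continuous in `(μ, K)`, for the `S`-norm distance from `α` to the coboundaries
of `K`-valued maps: rounding `b` to `K` changes each of the `|S|` terms of `‖α - db‖` by at most
twice the mean distance from `b` to `K`. -/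
noncomputable def roundingBound {G Y A : Type*} [MeasurableSpace Y] [SeminormedAddCommGroup A]
    (S : Finset G) (T : G → Y → Y) (α : G → Y → A) (b : Y → A) (μ : Measure Y) (K : Set A) : ℝ :=
  cochainNorm S μ (α - coboundary T b) + 2 * S.card * ∫ y, infDist (b y) K ∂μ

lemma continuous_roundingBound {G Y A : Type*} [TopologicalSpace Y] [CompactSpace Y]
    [MeasurableSpace Y] [BorelSpace Y] [NormedAddCommGroup A] {S : Finset G} {T : G → Y → Y}
    {α : G → Y → A} (hTc : ∀ s ∈ S, Continuous (T s)) (hα : ∀ s ∈ S, Continuous (α s))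
    {b : Y → A} (hb : Continuous b) :
    Continuous fun q : ProbabilityMeasure Y × NonemptyCompacts A ↦
      roundingBound S T α b (q.1 : Measure Y) (q.2 : Set A) := by
  have hnorm : Continuous fun μ : ProbabilityMeasure Y ↦
      cochainNorm S (μ : Measure Y) (α - coboundary T b) :=
    continuous_cochainNorm fun s hs ↦ (hα s hs).sub ((hb.comp (hTc s hs)).sub hb)
  exact (hnorm.comp continuous_fst).add (continuous_const.mul (continuous_integral_infDist hb))

variable {G X : Type*} [Group G] [MeasurableSpace X] {μ : Measure X} [IsFiniteMeasure μ]
  {S : Finset G} {T : G → X → X} {p : ℝ} [Fact (0 < p)] {K : AddSubgroup (AddCircle p)} {r : ℝ}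
  {α : G → X → AddCircle p}

lemma isNearCoboundary_of_roundingBound_lt (hT : IsMPAction T μ)
    (hα : ∀ s ∈ S, Measurable (α s)) {b : X → AddCircle p} (hb : Measurable b)
    (hlt : roundingBound S T α b μ (K : Set (AddCircle p)) < r) : IsNearCoboundary S T μ K r α := by
  let C : ℝ := 2 * S.card * μ.real Set.univ + 1
  let δ : ℝ := (r - roundingBound S T α b μ (K : Set (AddCircle p))) / C
  have hδ : 0 < δ := div_pos (sub_pos.2 hlt) (by positivity)
  obtain ⟨ρ, hρ, hρK, hρdist⟩ :=
    exists_measurable_dist_le_infDist_add (K := (K : Set (AddCircle p))) ⟨0, K.zero_mem⟩ hδ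
  have hβ : Measurable (ρ ∘ b) := hρ.comp hb
  have hround : ∫ y, ‖b y - ρ (b y)‖ ∂μ ≤
      ∫ y, infDist (b y) (K : Set (AddCircle p)) ∂μ + μ.real Set.univ * δ := by
    rw [← smul_eq_mul, ← integral_const,
      ← integral_add (integrable_infDist K hb) (integrable_const _)]
    refine integral_mono (integrable_of_measurable_of_compactSpace (hb.sub hβ)).norm
      ((integrable_infDist K hb).add (integrable_const _)) fun y ↦ ?_
    simpa only [Pi.sub_apply, Function.comp_apply, dist_eq_norm] using hρdist (b y)
  refine ⟨ρ ∘ b, hβ, fun y ↦ hρK (b y), ?_⟩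
  calc cochainNorm S μ (α - coboundary T (ρ ∘ b))
      ≤ cochainNorm S μ (α - coboundary T b) + 2 * S.card * ∫ y, ‖b y - ρ (b y)‖ ∂μ :=
        cochainNorm_sub_coboundary_le hT hα hb hβ
    _ ≤ cochainNorm S μ (α - coboundary T b) + 2 * S.card *
          (∫ y, infDist (b y) (K : Set (AddCircle p)) ∂μ + μ.real Set.univ * δ) := by gcongr
    _ < roundingBound S T α b μ (K : Set (AddCircle p)) + C * δ := by
        simp only [C, roundingBound]
        linarith
    _ = r := by simp only [δ, C]; field_simp; ring

lemma IsNearCoboundary.exists_roundingBound_lt [TopologicalSpace X] [NormalSpace X] [BorelSpace X]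
    [μ.WeaklyRegular] (hT : IsMPAction T μ) (hα : ∀ s ∈ S, Measurable (α s))
    (h : IsNearCoboundary S T μ K r α) :
    ∃ b : X → AddCircle p, Continuous b ∧ roundingBound S T α b μ (K : Set (AddCircle p)) < r := by
  obtain ⟨β, hβ, hβK, hlt⟩ := h
  let η : ℝ := (r - cochainNorm S μ (α - coboundary T β)) / (4 * S.card + 1)
  have hη : 0 < η := div_pos (sub_pos.2 hlt) (by positivity)
  obtain ⟨b, hb, hβb⟩ := exists_continuous_integral_norm_sub_le (μ := μ) hβ hη
  have hdist : ∫ y, infDist (b y) (K : Set (AddCircle p)) ∂μ ≤ η := by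
    refine (integral_mono (integrable_infDist K hb.measurable)
      (integrable_of_measurable_of_compactSpace (hβ.sub hb.measurable)).norm fun y ↦ ?_).trans hβb
    rw [Pi.sub_apply, ← dist_eq_norm, dist_comm]
    exact infDist_le_dist_of_mem (hβK y)
  refine ⟨b, hb, ?_⟩
  calc roundingBound S T α b μ (K : Set (AddCircle p))
      ≤ (cochainNorm S μ (α - coboundary T β) + 2 * S.card * ∫ y, ‖β y - b y‖ ∂μ) +
          2 * S.card * ∫ y, infDist (b y) (K : Set (AddCircle p)) ∂μ := by
        rw [roundingBound]
        gcongr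
        exact cochainNorm_sub_coboundary_le hT hα hβ hb.measurable
    _ ≤ (cochainNorm S μ (α - coboundary T β) + 2 * S.card * η) + 2 * S.card * η := by gcongr
    _ < cochainNorm S μ (α - coboundary T β) + (4 * S.card + 1) * η := by linarith
    _ = r := by simp only [η]; field_simp; ring

end NearCoboundary

section Compactness

lemma exists_finset_forall_lt_mem {ι Z : Type*} [TopologicalSpace Z] {C V : Set Z}
    (hC : IsCompact C) (hV : IsOpen V) {N : ι → Z → ℝ} (hN : ∀ i, Continuous (N i))
    (hCV : ∀ z ∈ C, (∀ i, N i z ≤ 0) → z ∈ V) :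
    ∃ ε > 0, ∃ F : Finset ι, ∀ z ∈ C, (∀ i ∈ F, N i z < ε) → z ∈ V := by
  classical
  refine hC.induction_on (p := fun B ↦ ∃ ε > 0, ∃ F : Finset ι, ∀ z ∈ B,
    (∀ i ∈ F, N i z < ε) → z ∈ V) ⟨1, one_pos, ∅, by simp⟩ ?_ ?_ fun z hz ↦ ?_
  · rintro B B' hBB' ⟨ε, hε, F, hF⟩
    exact ⟨ε, hε, F, fun z hz ↦ hF z (hBB' hz)⟩
  · rintro B B' ⟨ε, hε, F, hF⟩ ⟨ε', hε', F', hF'⟩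
    refine ⟨min ε ε', lt_min hε hε', F ∪ F', fun z hz hlt ↦ ?_⟩
    rcases hz with hz | hz
    · exact hF z hz fun i hi ↦
        (hlt i (Finset.mem_union_left _ hi)).trans_le (min_le_left _ _)
    · exact hF' z hz fun i hi ↦
        (hlt i (Finset.mem_union_right _ hi)).trans_le (min_le_right _ _)
  · by_cases hzV : z ∈ V
    · exact ⟨V, mem_nhdsWithin_of_mem_nhds (hV.mem_nhds hzV), 1, one_pos, ∅, fun _ h _ ↦ h⟩
    · obtain ⟨i, hi⟩ : ∃ i, 0 < N i z := by
        by_contra! hle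
        exact hzV (hCV z hz hle)
      refine ⟨{y | N i z / 2 < N i y}, mem_nhdsWithin_of_mem_nhds
        ((isOpen_lt continuous_const (hN i)).mem_nhds (half_lt_self hi)), N i z / 2, half_pos hi,
        {i}, fun y hy hlt ↦ ?_⟩
      exact absurd (hlt i (Finset.mem_singleton_self i)) (not_lt_of_gt hy)

end Compactness

section CompactModel

open TopologicalSpace

/-- The word `w` in `S` is a relation of `G`. -/
def IsRelation {G : Type*} [Group G] (S : Finset G) (w : List G) : Prop :=
  (∀ s ∈ w, s ∈ S) ∧ w.prod = 1

/-- Every `K`-valued cocycle over `(X, μ, T)` of `S`-norm at most `r` is a coboundary. -/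
def SmallCocyclesAreCoboundaries {G X : Type*} [Group G] [MeasurableSpace X] (S : Finset G)
    (T : G → X → X) (μ : Measure X) (K : AddSubgroup UnitAddCircle) (r : ℝ) : Prop :=
  ∀ α : G → X → UnitAddCircle, IsCocycle S T μ K α → cochainNorm S μ α ≤ r →
    ∃ β : X → UnitAddCircle, Measurable β ∧ (∀ x, β x ∈ K) ∧
      ∀ s ∈ S, α s =ᵐ[μ] coboundary T β s

variable {G : Type*} [Group G] {S : Finset G}

lemma SmallCocyclesAreCoboundaries.isNearCoboundary {X : Type*} [MeasurableSpace X] {μ : Measure X}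
    {T : G → X → X} {K : AddSubgroup UnitAddCircle} {r r' : ℝ}
    (hcob : SmallCocyclesAreCoboundaries S T μ K r) (hT : IsMPAction T μ)
    (hK : IsClosed (K : Set UnitAddCircle)) {α : G → X → UnitAddCircle}
    (hα : ∀ s ∈ S, Measurable (α s)) (hαK : ∀ s ∈ S, ∀ᵐ x ∂μ, α s x ∈ K)
    (hrel : ∀ w, IsRelation S w → cocycleSum T α w =ᵐ[μ] 0) (hle : cochainNorm S μ α ≤ r)
    (hr' : 0 < r') : IsNearCoboundary S T μ K r' α := by
  obtain ⟨α', hα', heq⟩ := exists_isCocycle_ae_eq hT hK hα hαK fun w hw hw1 ↦ hrel w ⟨hw, hw1⟩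
  obtain ⟨β, hβ, hβK, hαβ⟩ := hcob α' hα' ((cochainNorm_congr_ae heq).trans_le hle)
  refine ⟨β, hβ, hβK, ?_⟩
  have hzero : ∀ s ∈ S, (α - coboundary T β) s =ᵐ[μ] (0 : G → X → UnitAddCircle) s := fun s hs ↦ by
    filter_upwards [heq s hs, hαβ s hs] with x hx hx'
    simp [← hx, hx']
  rw [cochainNorm_congr_ae hzero]
  simpa [cochainNorm] using hr'

lemma ae_eq_zero_of_integral_norm_le_zero {X A : Type*} [MeasurableSpace X] {μ : Measure X}
    [NormedAddCommGroup A] {f : X → A} (hf : Integrable f μ) (hle : ∫ x, ‖f x‖ ∂μ ≤ 0) :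
    f =ᵐ[μ] 0 := by
  have hzero := hle.antisymm (integral_nonneg fun x ↦ norm_nonneg (f x))
  rw [integral_eq_zero_iff_of_nonneg (fun x ↦ norm_nonneg (f x)) hf.norm] at hzero
  filter_upwards [hzero] with x hx using norm_eq_zero.1 hx

variable {Y : Type} [TopologicalSpace Y] [CompactSpace Y] [MetrizableSpace Y] [MeasurableSpace Y]
  [BorelSpace Y] {T : G → Y → Y} {α : G → Y → UnitAddCircle} {r r' : ℝ}

/-- The pairs `(μ, K)` of an ergodic invariant measure and a closed subgroup of the circle for
which the fixed cochain `α` is almost surely `K`-valued and of `S`-norm at most `r`. -/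
def ergodicPairs (S : Finset G) (T : G → Y → Y) (α : G → Y → UnitAddCircle) (r : ℝ) :
    Set (ProbabilityMeasure Y × NonemptyCompacts UnitAddCircle) :=
  {q | (IsMPAction T (q.1 : Measure Y) ∧ IsErgodicAction T (q.1 : Measure Y)) ∧
    (∃ K : AddSubgroup UnitAddCircle, (K : Set UnitAddCircle) = q.2) ∧
    (∀ s ∈ S, ∀ᵐ y ∂(q.1 : Measure Y), α s y ∈ q.2) ∧ cochainNorm S (q.1 : Measure Y) α ≤ r}

lemma IsKazhdanPair.isClosed_ergodicPairs [Countable G] {c : ℝ} (hS : IsKazhdanPair S c)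
    (hc : 0 < c) (hTc : ∀ g, Continuous (T g)) (hα : ∀ s ∈ S, Continuous (α s)) :
    IsClosed (ergodicPairs S T α r) := by
  have heq : ergodicPairs S T α r =
      (Prod.fst ⁻¹' {μ : ProbabilityMeasure Y |
        IsMPAction T (μ : Measure Y) ∧ IsErgodicAction T (μ : Measure Y)}) ∩
      ((Prod.snd ⁻¹' {L : NonemptyCompacts UnitAddCircle |
        ∃ K : AddSubgroup UnitAddCircle, (K : Set UnitAddCircle) = L}) ∩
      ((⋂ s ∈ S, {q : ProbabilityMeasure Y × NonemptyCompacts UnitAddCircle |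
        ∫ y, Metric.infDist (α s y) (q.2 : Set UnitAddCircle) ∂q.1 = 0}) ∩
      {q | cochainNorm S (q.1 : Measure Y) α ≤ r})) := by
    ext ⟨μ, L⟩
    simp only [ergodicPairs, Set.mem_inter_iff, Set.mem_preimage, Set.mem_iInter,
      Set.mem_ofPred_eq]
    refine and_congr_right' <| and_congr_right fun ⟨K, hK⟩ ↦ and_congr_left' <|
      forall₂_congr fun s hs ↦ ?_
    rw [← hK, integral_infDist_eq_zero_iff (hK ▸ L.isCompact.isClosed) (hα s hs).measurable]
    simp only [← SetLike.mem_coe, hK]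
  rw [heq]
  exact ((hS.isClosed_setOf_isErgodicAction hc hTc).preimage continuous_fst).inter <|
    (isClosed_setOf_addSubgroup.preimage continuous_snd).inter <|
    (isClosed_biInter fun s hs ↦
      isClosed_eq (continuous_integral_infDist (hα s hs)) continuous_const).inter <|
    isClosed_le ((continuous_cochainNorm hα).comp continuous_fst) continuous_const

lemma exists_continuousMap_roundingBound_lt (hα : ∀ s ∈ S, Continuous (α s))
    (hTc : ∀ g, Continuous (T g))
    (hcob : ∀ μ : ProbabilityMeasure Y, IsMPAction T (μ : Measure Y) →
      IsErgodicAction T (μ : Measure Y) → ∀ K : AddSubgroup UnitAddCircle,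
      IsClosed (K : Set UnitAddCircle) → SmallCocyclesAreCoboundaries S T μ K r) (hr' : 0 < r')
    {q : ProbabilityMeasure Y × NonemptyCompacts UnitAddCircle} (hq : q ∈ ergodicPairs S T α r)
    (hrel : ∀ w, IsRelation S w → ∫ y, ‖cocycleSum T α w y‖ ∂q.1 ≤ 0) :
    ∃ b : C(Y, UnitAddCircle), roundingBound S T α b q.1 (q.2 : Set UnitAddCircle) < r' := by
  obtain ⟨μ, L⟩ := q
  obtain ⟨⟨hT, hE⟩, ⟨K, hKL⟩, hαK, hle⟩ := hq
  have hK : IsClosed (K : Set UnitAddCircle) := hKL ▸ L.isCompact.isClosed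
  have hαm : ∀ s ∈ S, Measurable (α s) := fun s hs ↦ (hα s hs).measurable
  have hαK' : ∀ s ∈ S, ∀ᵐ y ∂(μ : Measure Y), α s y ∈ K := fun s hs ↦ by
    filter_upwards [hαK s hs] with y hy
    exact (Set.ext_iff.1 hKL _).2 hy
  have hzero (w) (hw : IsRelation S w) : cocycleSum T α w =ᵐ[(μ : Measure Y)] 0 :=
    ae_eq_zero_of_integral_norm_le_zero (integrable_of_measurable_of_compactSpace
      (continuous_cocycleSum hTc fun s hs ↦ hα s (hw.1 s hs)).measurable) (hrel w hw)
  obtain ⟨b, hb, hlt⟩ := ((hcob μ hT hE K hK).isNearCoboundary hT hK hαm hαK' hzero hle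
    hr').exists_roundingBound_lt hT hαm
  exact ⟨⟨b, hb⟩, hKL ▸ hlt⟩

theorem IsKazhdanPair.exists_finset_isNearCoboundary_of_continuous [Countable G] {c : ℝ}
    (hS : IsKazhdanPair S c) (hc : 0 < c) (hTc : ∀ g, Continuous (T g))
    (hα : ∀ s ∈ S, Continuous (α s))
    (hcob : ∀ μ : ProbabilityMeasure Y, IsMPAction T (μ : Measure Y) →
      IsErgodicAction T (μ : Measure Y) → ∀ K : AddSubgroup UnitAddCircle,
      IsClosed (K : Set UnitAddCircle) → SmallCocyclesAreCoboundaries S T μ K r)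
    (hr' : 0 < r') :
    ∃ ε > 0, ∃ F : Finset {w // IsRelation S w}, ∀ μ : ProbabilityMeasure Y,
      IsMPAction T (μ : Measure Y) → IsErgodicAction T (μ : Measure Y) →
      ∀ K : AddSubgroup UnitAddCircle, IsClosed (K : Set UnitAddCircle) →
      (∀ s ∈ S, ∀ᵐ y ∂(μ : Measure Y), α s y ∈ K) →
      (∀ w ∈ F, ∫ y, ‖cocycleSum T α w y‖ ∂μ < ε) → cochainNorm S (μ : Measure Y) α ≤ r →
      IsNearCoboundary S T (μ : Measure Y) K r' α := by
  have hopen : IsOpen (⋃ b : C(Y, UnitAddCircle),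
      {q : ProbabilityMeasure Y × NonemptyCompacts UnitAddCircle |
        roundingBound S T α b q.1 (q.2 : Set UnitAddCircle) < r'}) :=
    isOpen_iUnion fun b ↦ isOpen_lt
      (continuous_roundingBound (fun s _ ↦ hTc s) hα b.continuous) continuous_const
  have hsum (w : {w // IsRelation S w}) :
      Continuous fun q : ProbabilityMeasure Y × NonemptyCompacts UnitAddCircle ↦
        ∫ y, ‖cocycleSum T α w y‖ ∂q.1 :=
    (continuous_integral_norm (continuous_cocycleSum hTc fun s hs ↦
      hα s (w.2.1 s hs))).comp continuous_fst
  obtain ⟨ε, hε, F, hF⟩ := exists_finset_forall_lt_mem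
    (hS.isClosed_ergodicPairs (r := r) hc hTc hα).isCompact hopen hsum
    fun q hq hrel ↦ Set.mem_iUnion.2 <|
      exists_continuousMap_roundingBound_lt hα hTc hcob hr' hq fun w hw ↦ hrel ⟨w, hw⟩
  refine ⟨ε, hε, F, fun μ hT hE K hK hαK hlt hle ↦ ?_⟩
  let L : NonemptyCompacts UnitAddCircle := ⟨⟨K, hK.isCompact⟩, 0, K.zero_mem⟩
  obtain ⟨b, hb⟩ := Set.mem_iUnion.1 (hF (μ, L) ⟨⟨hT, hE⟩, ⟨K, rfl⟩, hαK, hle⟩ hlt)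
  exact isNearCoboundary_of_roundingBound_lt hT (fun s hs ↦ (hα s hs).measurable)
    b.continuous.measurable hb

end CompactModel

section FactorMaps

variable {G X Y : Type*} {φ : X → Y}

section Cochains

variable [MeasurableSpace X] [MeasurableSpace Y] {μ : Measure X} {ν : Measure Y} {T : G → X → X}
  {T' : G → Y → Y} {A : Type*} [NormedAddCommGroup A] [MeasurableSpace A] [BorelSpace A]
  {S : Finset G} {α : G → X → A} {α' : G → Y → A}

lemma cochainNorm_comp (hφ : MeasurePreserving φ μ ν) (hα' : ∀ s ∈ S, Measurable (α' s))
    (hα : ∀ s ∈ S, α' s ∘ φ = α s) : cochainNorm S μ α = cochainNorm S ν α' := by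
  refine Finset.sum_congr rfl fun s hs ↦ ?_
  rw [← hα s hs]
  exact integral_comp_measurePreserving hφ (hα' s hs).norm.aestronglyMeasurable

lemma IsNearCoboundary.comp [SecondCountableTopology A] (hφ : MeasurePreserving φ μ ν)
    (hequiv : ∀ g, Function.Semiconj φ (T g) (T' g)) (hT' : ∀ g, Measurable (T' g))
    (hα' : ∀ s ∈ S, Measurable (α' s)) (hα : ∀ s ∈ S, α' s ∘ φ = α s) {K : AddSubgroup A} {r : ℝ}
    (h : IsNearCoboundary S T' ν K r α') : IsNearCoboundary S T μ K r α := by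
  obtain ⟨β, hβ, hβK, hlt⟩ := h
  refine ⟨β ∘ φ, hβ.comp hφ.measurable, fun x ↦ hβK (φ x), ?_⟩
  rwa [cochainNorm_comp hφ fun s hs ↦ (hα' s hs).sub ((hβ.comp (hT' s)).sub hβ)]
  intro s hs
  ext x
  simp [coboundary, ← hα s hs, (hequiv s).eq]

end Cochains

section Action

variable [Group G] {T : G → X → X} {T' : G → Y → Y}

lemma cocycleSum_comp (hequiv : ∀ g, Function.Semiconj φ (T g) (T' g))
    {α : G → X → UnitAddCircle} {α' : G → Y → UnitAddCircle} {w : List G}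
    (hα : ∀ s ∈ w, α' s ∘ φ = α s) (x : X) : cocycleSum T' α' w (φ x) = cocycleSum T α w x := by
  induction w with
  | nil => rfl
  | cons s w ih =>
    rw [List.forall_mem_cons] at hα
    rw [cocycleSum, cocycleSum, ih hα.2, ← hequiv w.prod x, ← hα.1, Function.comp_apply]

variable [MeasurableSpace X] [MeasurableSpace Y] {μ : Measure X}

lemma IsMPAction.map (hT : IsMPAction T μ) (hφ : Measurable φ)
    (hequiv : ∀ g, Function.Semiconj φ (T g) (T' g)) (hm : ∀ g, Measurable (T' g))
    (h1 : T' 1 = id) (hmul : ∀ g h, T' (g * h) = T' g ∘ T' h) : IsMPAction T' (μ.map φ) := by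
  refine ⟨hm, fun g ↦ ?_, h1, hmul⟩
  rw [Measure.map_map (hm g) hφ, ← (hequiv g).comp_eq, ← Measure.map_map hφ (hT.1 g), hT.2.1 g]

lemma IsErgodicAction.map (hE : IsErgodicAction T μ) (hφ : Measurable φ)
    (hequiv : ∀ g, Function.Semiconj φ (T g) (T' g)) : IsErgodicAction T' (μ.map φ) := by
  intro A hA hTA
  rw [Measure.map_apply hφ hA]
  refine hE _ (hφ hA) fun g ↦ ?_
  rw [← Set.preimage_comp, (hequiv g).comp_eq, Set.preimage_comp, hTA g]

end Action

end FactorMaps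

section UniversalModel

/-- The compact space of all tables `(h, s) ↦ y (h, s)` of cochain values along orbits; the index
set is shrunk to `Type`, where the spaces quantified over in the hypotheses live. -/
abbrev CochainSpace {G : Type*} [Countable G] (S : Finset G) : Type :=
  Shrink.{0} (G × S) → UnitAddCircle

namespace CochainSpace

variable {G X : Type*} [Group G] [Countable G] {S : Finset G} {T : G → X → X}
  {α : G → X → UnitAddCircle}

instance : Countable (Shrink.{0} (G × S)) :=
  (equivShrink _).symm.injective.countable

/-- The right-translation action of `G` on tables. -/
noncomputable def shift (g : G) (y : CochainSpace S) : CochainSpace S :=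
  fun i ↦
    let p := (equivShrink.{0} (G × S)).symm i
    y (equivShrink _ (p.1 * g, p.2))

open Classical in
/-- The tautological cochain over the shift, `(s, y) ↦ y (1, s)`. -/
noncomputable def coordinate (s : G) (y : CochainSpace S) : UnitAddCircle :=
  if hs : s ∈ S then y (equivShrink _ (1, ⟨s, hs⟩)) else 0

/-- The table of the values of `α` along the orbit of `x`. -/
noncomputable def ofCochain (S : Finset G) (T : G → X → X) (α : G → X → UnitAddCircle) (x : X) :
    CochainSpace S :=
  fun i ↦
    let p := (equivShrink.{0} (G × S)).symm i
    α p.2 (T p.1 x)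

lemma continuous_shift (g : G) : Continuous (shift g : CochainSpace S → CochainSpace S) :=
  continuous_pi fun _ ↦ continuous_apply _

lemma shift_one : (shift 1 : CochainSpace S → CochainSpace S) = id := by
  ext y i
  simp [shift]

lemma shift_mul (g h : G) :
    (shift (g * h) : CochainSpace S → CochainSpace S) = shift g ∘ shift h := by
  ext y i
  simp [shift, mul_assoc]

lemma continuous_coordinate (s : G) : Continuous (coordinate s : CochainSpace S → _) := by
  unfold coordinate
  split_ifs
  · exact continuous_apply _
  · exact continuous_const

variable [MeasurableSpace X] {μ : Measure X}

lemma measurable_ofCochain (hT : IsMPAction T μ) (hα : ∀ s ∈ S, Measurable (α s)) :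
    Measurable (ofCochain S T α) :=
  measurable_pi_iff.2 fun _ ↦ (hα _ (Subtype.prop _)).comp (hT.1 _)

lemma semiconj_ofCochain (hT : IsMPAction T μ) (g : G) :
    Function.Semiconj (ofCochain S T α) (T g) (shift g) := fun x ↦ by
  ext i
  simp [ofCochain, shift, hT.mul_apply]

lemma coordinate_comp_ofCochain (hT : IsMPAction T μ) {s : G} (hs : s ∈ S) :
    coordinate s ∘ ofCochain S T α = α s := by
  ext x
  simp [coordinate, ofCochain, hs, hT.one_apply]

variable (S) in
lemma exists_measurePreserving_ofCochain [IsProbabilityMeasure μ] (hT : IsMPAction T μ)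
    (hE : IsErgodicAction T μ) (hα : ∀ s ∈ S, Measurable (α s)) :
    ∃ ν : ProbabilityMeasure (CochainSpace S),
      IsMPAction shift (ν : Measure (CochainSpace S)) ∧
      IsErgodicAction shift (ν : Measure (CochainSpace S)) ∧
      MeasurePreserving (ofCochain S T α) μ ν := by
  have hφ : Measurable (ofCochain S T α) := measurable_ofCochain hT hα
  exact ⟨⟨μ.map (ofCochain S T α), Measure.isProbabilityMeasure_map hφ.aemeasurable⟩,
    hT.map hφ (semiconj_ofCochain hT) (fun g ↦ (continuous_shift g).measurable) shift_one shift_mul,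
    hE.map hφ (semiconj_ofCochain hT), hφ, rfl⟩

lemma integral_norm_cocycleSum_coordinate {ν : Measure (CochainSpace S)} (hT : IsMPAction T μ)
    (hν : MeasurePreserving (ofCochain S T α) μ ν) {w : List G} (hw : ∀ s ∈ w, s ∈ S) :
    ∫ y, ‖cocycleSum shift (coordinate (S := S)) w y‖ ∂ν = ∫ x, ‖cocycleSum T α w x‖ ∂μ := by
  have hsum : Continuous (cocycleSum shift (coordinate (S := S)) w) :=
    continuous_cocycleSum continuous_shift fun s _ ↦ continuous_coordinate s
  rw [← integral_comp_measurePreserving hν hsum.norm.aestronglyMeasurable]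
  simp only [cocycleSum_comp (semiconj_ofCochain hT) fun s hs ↦
    coordinate_comp_ofCochain hT (hw s hs)]

end CochainSpace

end UniversalModel

lemma countable_of_closure_eq_top {G : Type*} [Group G] {s : Set G} (hs : s.Countable)
    (hgen : Subgroup.closure s = ⊤) : Countable G := by
  have := hs.to_subtype
  rw [FreeGroup.closure_eq_range, MonoidHom.range_eq_top] at hgen
  exact hgen.countable

theorem near_cocycles_near_coboundaries_general {G : Type*} [Group G] [Countable G] (S : Finset G)
    (hT : HasPropertyT G S) (r : ℝ)
    (hcob : ∀ (X : Type) (_ : MeasurableSpace X) (_ : StandardBorelSpace X) (μ : Measure X),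
      IsProbabilityMeasure μ →
      ∀ T : G → X → X, IsMPAction T μ → IsErgodicAction T μ →
        ∀ K : AddSubgroup UnitAddCircle, IsClosed (K : Set UnitAddCircle) →
          SmallCocyclesAreCoboundaries S T μ K r) :
    ∀ r' : ℝ, 0 < r' →
      ∃ (ε : ℝ) (F : Finset (List G)), 0 < ε ∧ (∀ w ∈ F, IsRelation S w) ∧
        ∀ (X : Type*) (_ : MeasurableSpace X) (μ : Measure X), IsProbabilityMeasure μ →
          ∀ T : G → X → X, IsMPAction T μ → IsErgodicAction T μ →
            ∀ K : AddSubgroup UnitAddCircle, IsClosed (K : Set UnitAddCircle) →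
              ∀ α : G → X → UnitAddCircle,
                (∀ s ∈ S, Measurable (α s)) → (∀ s ∈ S, ∀ x, α s x ∈ K) →
                (∀ w ∈ F, ∫ x, ‖cocycleSum T α w x‖ ∂μ < ε) → cochainNorm S μ α ≤ r →
                IsNearCoboundary S T μ K r' α := by
  intro r' hr'
  obtain ⟨c, hc, hS : IsKazhdanPair S c⟩ := hT
  have hcobS (μ : ProbabilityMeasure (CochainSpace S)) :=
    hcob (CochainSpace S) inferInstance inferInstance μ inferInstance CochainSpace.shift
  obtain ⟨ε, hε, F, hF⟩ := hS.exists_finset_isNearCoboundary_of_continuous hc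
    CochainSpace.continuous_shift (fun s _ ↦ CochainSpace.continuous_coordinate s) hcobS hr'
  refine ⟨ε, F.map (.subtype _), hε, fun w hw ↦ F.property_of_mem_map_subtype hw,
    fun X _ μ _ T hT hE K hK α hα hαK hlt hle ↦ ?_⟩
  obtain ⟨ν, hνT, hνE, hν⟩ := CochainSpace.exists_measurePreserving_ofCochain S hT hE hα
  have hmeas (s : G) (_ : s ∈ S) : Measurable (CochainSpace.coordinate (S := S) s) :=
    (CochainSpace.continuous_coordinate s).measurable
  have hcoord (s : G) (hs : s ∈ S) :
      CochainSpace.coordinate s ∘ CochainSpace.ofCochain S T α = α s :=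
    CochainSpace.coordinate_comp_ofCochain hT hs
  have hνK (s : G) (hs : s ∈ S) :
      ∀ᵐ y ∂(ν : Measure (CochainSpace S)), CochainSpace.coordinate s y ∈ K := by
    rw [← hν.map_eq]
    refine (ae_map_iff hν.aemeasurable (hmeas s hs hK.measurableSet)).2 (.of_forall fun x ↦ ?_)
    exact congr($(hcoord s hs) x ∈ K) ▸ hαK s hs x
  refine (hF ν hνT hνE K hK hνK (fun w hw ↦ ?_)
    ((cochainNorm_comp hν hmeas hcoord).symm.trans_le hle)).comp hν
      (CochainSpace.semiconj_ofCochain hT) (fun g ↦ (CochainSpace.continuous_shift g).measurable)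
      hmeas hcoord
  rw [CochainSpace.integral_norm_cocycleSum_coordinate hT hν w.2.1]
  exact hlt w (Finset.mem_map_of_mem _ hw)

/-- **Near-cocycle version.**  Let `r` be as in the coboundary theorem for property-(T) groups.
For every `r' > 0` there are `ε > 0` and a finite set `F` of relations such that over every
ergodic `G`-system, every `K`-valued `(F, ε)`-near-cocycle of `S`-norm at most `r` is within
`r'` of a coboundary. -/
theorem near_cocycles_near_coboundaries {G : Type*} [Group G] (S : Finset G)
    (hsym : ∀ s ∈ S, s⁻¹ ∈ S) (hgen : Subgroup.closure (S : Set G) = ⊤)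
    (hT : HasPropertyT G S)
    (r : ℝ) (hr : 0 < r)
    (hcob : ∀ (X : Type) (_ : MeasurableSpace X) (_ : StandardBorelSpace X) (μ : Measure X),
      IsProbabilityMeasure μ →
      ∀ T : G → X → X, IsMPAction T μ → IsErgodicAction T μ →
        ∀ K : AddSubgroup UnitAddCircle, IsClosed (K : Set UnitAddCircle) →
          ∀ α : G → X → UnitAddCircle, IsCocycle S T μ K α →
            (∑ s ∈ S, ∫ x, ‖α s x‖ ∂μ) ≤ r →
            ∃ β : X → UnitAddCircle, Measurable β ∧ (∀ x, β x ∈ K) ∧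
              ∀ s ∈ S, ∀ᵐ x ∂μ, α s x = β (T s x) - β x) :
    ∀ r' : ℝ, 0 < r' →
      ∃ (ε : ℝ) (F : Finset (List G)), 0 < ε ∧
        (∀ w ∈ F, (∀ s ∈ w, s ∈ S) ∧ w.prod = 1) ∧
        ∀ (X : Type) (_ : MeasurableSpace X) (_ : StandardBorelSpace X) (μ : Measure X),
          IsProbabilityMeasure μ →
          ∀ T : G → X → X, IsMPAction T μ → IsErgodicAction T μ →
            ∀ K : AddSubgroup UnitAddCircle, IsClosed (K : Set UnitAddCircle) →
              ∀ α : G → X → UnitAddCircle,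
                (∀ s ∈ S, Measurable (α s)) → (∀ s ∈ S, ∀ x, α s x ∈ K) →
                (∀ w ∈ F, (∫ x, ‖cocycleSum T α w x‖ ∂μ) < ε) →
                (∑ s ∈ S, ∫ x, ‖α s x‖ ∂μ) ≤ r →
                ∃ β : X → UnitAddCircle, Measurable β ∧ (∀ x, β x ∈ K) ∧
                  (∑ s ∈ S, ∫ x, ‖α s x - (β (T s x) - β x)‖ ∂μ) < r' := by
  have : Countable G := countable_of_closure_eq_top S.countable_toSet hgen
  intro r' hr'
  obtain ⟨ε, F, hε, hF, hnear⟩ := near_cocycles_near_coboundaries_general S hT r hcob r' hr'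
  exact ⟨ε, F, hε, hF, fun X _ _ ↦ hnear X _⟩
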